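/- For every density operator ρ on a finite-dimensional n-partite Hilbert space H^{A_1}⊗⋯⊗H^{A_n} (n ≥ 3), I'(A_1:A_2:⋯:A_n) − I'(A_1:A_2:⋯:A_{n−1}) = Σ_{i=1}^{n−1} ( S(Ā_i) + S(Ā_n) − S(A_1A_2⋯A_n) − S(complement of A_iA_n) ) ≥ 0; in particular for n = 3, I'(A:B:C) − I'(A:B) = (S(AB) + S(BC) − S(ABC) − S(B)) + (S(AB) + S(AC) − S(ABC) − S(A)) ≥ 0. -/

import Mathlib

open scoped BigOperators ComplexOrder
open Matrix

noncomputable section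

/-- The function `x ↦ -x·log₂ x` (with the convention `0·log₂ 0 = 0`). -/
def negxlog2 (x : ℝ) : ℝ := -(x * Real.logb 2 x)

/-- The von Neumann entropy (base 2), `S(ρ) = -Tr(ρ log₂ ρ)`, computed as the sum of
`-λ log₂ λ` over the eigenvalues of a Hermitian matrix (junk value `0` otherwise). -/
def vnEntropy {n : Type} [Fintype n] [DecidableEq n] (ρ : Matrix n n ℂ) : ℝ :=
  if h : ρ.IsHermitian then ∑ i, negxlog2 (h.eigenvalues i) else 0

/-- The Tsallis q-entropy `S_q(ρ) = (1 - Tr ρ^q)/(q-1)`, computed via eigenvalues. -/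
def tsallisEntropy (q : ℝ) {n : Type} [Fintype n] [DecidableEq n] (ρ : Matrix n n ℂ) : ℝ :=
  if h : ρ.IsHermitian then (1 - ∑ i, (h.eigenvalues i) ^ q) / (q - 1) else 0

/-- A density operator: positive semidefinite with unit trace. -/
def IsDensity {n : Type} [Fintype n] [DecidableEq n] (ρ : Matrix n n ℂ) : Prop :=
  ρ.PosSemidef ∧ ρ.trace = 1

/-- rank-one projection `|ψ⟩⟨ψ|`. -/
def outer {α : Type} (ψ : α → ℂ) : Matrix α α ℂ :=
  fun a b => ψ a * (starRingEnd ℂ) (ψ b)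

section multi

variable {ι : Type} [Fintype ι] [DecidableEq ι] {d : ι → Type}
  [∀ i, Fintype (d i)] [∀ i, DecidableEq (d i)]

/-- Combine an assignment of basis indices on the parties in `s` with one on the
complementary parties. -/
def combine (s : Finset ι) (x : (i : {j // j ∈ s}) → d i.1) (z : (i : {j // j ∉ s}) → d i.1)
    (i : ι) : d i :=
  if h : i ∈ s then x ⟨i, h⟩ else z ⟨i, h⟩

/-- The reduced state on the parties in `s`: partial trace over the complementary parties. -/
def pTr (ρ : Matrix (∀ i, d i) (∀ i, d i) ℂ) (s : Finset ι) :
    Matrix ((i : {j // j ∈ s}) → d i.1) ((i : {j // j ∈ s}) → d i.1) ℂ :=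
  fun x y => ∑ z : (i : {j // j ∉ s}) → d i.1, ρ (combine s x z) (combine s y z)

/-- von Neumann entropy of the reduced state on `s`. -/
def Sv (ρ : Matrix (∀ i, d i) (∀ i, d i) ℂ) (s : Finset ι) : ℝ := vnEntropy (pTr ρ s)

/-- Tsallis q-entropy of the reduced state on `s`. -/
def Sq (q : ℝ) (ρ : Matrix (∀ i, d i) (∀ i, d i) ℂ) (s : Finset ι) : ℝ :=
  tsallisEntropy q (pTr ρ s)

/-- Multipartite quantum mutual information `I(X₁:⋯:X_k) = Σ_s S(X_s) - S(X₁⋯X_k)` of a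
partition `P` (each block a finset of parties, treated as a single party). -/
def MI (ρ : Matrix (∀ i, d i) (∀ i, d i) ℂ) (P : Finset (Finset ι)) : ℝ :=
  (∑ X ∈ P, Sv ρ X) - Sv ρ (P.sup id)

/-- Dual multipartite quantum mutual information
`I'(X₁:⋯:X_k) = Σ_s S(X̄_s) - (k-1) S(X₁⋯X_k)`, where `X̄_s` is the union of all blocks
other than `X_s`. -/
def MI' (ρ : Matrix (∀ i, d i) (∀ i, d i) ℂ) (P : Finset (Finset ι)) : ℝ :=
  (∑ X ∈ P, Sv ρ (P.sup id \ X)) - ((P.card : ℝ) - 1) * Sv ρ (P.sup id)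

/-- Tsallis multipartite quantum mutual information. -/
def MIq (q : ℝ) (ρ : Matrix (∀ i, d i) (∀ i, d i) ℂ) (P : Finset (Finset ι)) : ℝ :=
  (∑ X ∈ P, Sq q ρ X) - Sq q ρ (P.sup id)

/-- Tsallis dual multipartite quantum mutual information. -/
def MIq' (q : ℝ) (ρ : Matrix (∀ i, d i) (∀ i, d i) ℂ) (P : Finset (Finset ι)) : ℝ :=
  (∑ X ∈ P, Sq q ρ (P.sup id \ X)) - ((P.card : ℝ) - 1) * Sq q ρ (P.sup id)

/-- The finest partition of the set `s` of parties: each party its own block. -/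
def finest (s : Finset ι) : Finset (Finset ι) := s.image fun i => {i}

end multi

/-- A partition (of a subsystem): nonempty pairwise disjoint blocks. -/
def IsPartition {ι : Type} [DecidableEq ι] (P : Finset (Finset ι)) : Prop :=
  (∀ X ∈ P, X.Nonempty) ∧ (P : Set (Finset ι)).PairwiseDisjoint id

/-- One coarsening step: (a) discarding whole blocks, (b) merging blocks into one block,
(c) discarding some parties from within a block containing at least two parties. -/
inductive CoarserStep {ι : Type} [DecidableEq ι] : Finset (Finset ι) → Finset (Finset ι) → Prop
  | discard {P Q : Finset (Finset ι)} (hQP : Q ⊆ P) (hQ : Q.Nonempty) : CoarserStep P Q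
  | merge (P T : Finset (Finset ι)) (hT : T ⊆ P) (hT' : T.Nonempty) :
      CoarserStep P (insert (T.sup id) (P \ T))
  | shrink (P : Finset (Finset ι)) (X X' : Finset ι) (hX : X ∈ P) (h2 : 2 ≤ X.card)
      (hsub : X' ⊆ X) (hne : X'.Nonempty) : CoarserStep P (insert X' (P.erase X))

/-- `Coarser P Q` : the partition `Q` is coarser than `P` (`P ≻ Q`). -/
def Coarser {ι : Type} [DecidableEq ι] (P Q : Finset (Finset ι)) : Prop :=
  Relation.ReflTransGen CoarserStep P Q

end


section core
open Kronecker
set_option linter.unusedSectionVars false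
variable {n m k l : Type} [Fintype n] [DecidableEq n] [Fintype m] [DecidableEq m]
  [Fintype k] [DecidableEq k] [Fintype l] [DecidableEq l]

/-- spectral decomposition data -/
def SD (ρ : Matrix n n ℂ) (V : Matrix n m ℂ) (p : m → ℝ) : Prop :=
  ρ = V * diagonal (fun i => (p i : ℂ)) * Vᴴ ∧ Vᴴ * V = 1 ∧ V * Vᴴ = 1

noncomputable def Qf (ρ σ : Matrix n n ℂ) (t : ℝ) (X : Matrix n n ℂ) : ℝ :=
  2 * (trace (Xᴴ * ρ)).re - (trace (X * Xᴴ * σ)).re - t * (trace (Xᴴ * X * ρ)).re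

noncomputable def Ff (t : ℝ) (p : m → ℝ) (q : k → ℝ) (U : Matrix k m ℂ) : ℝ :=
  ∑ j, ∑ i, Complex.normSq (U j i) * (p i ^ 2 / (q j + t * p i))

lemma Qf_eq {ρ σ : Matrix n n ℂ} {V : Matrix n m ℂ} {W : Matrix n k ℂ} {p : m → ℝ} {q : k → ℝ}
    (hρ : SD ρ V p) (hσ : SD σ W q) (t : ℝ) (Y : Matrix k m ℂ) :
    Qf ρ σ t (W * Y * Vᴴ) = ∑ j, ∑ i, (2 * ((star (Y j i) * (Wᴴ * V) j i).re * p i)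
      - (q j + t * p i) * Complex.normSq (Y j i)) := by
  obtain ⟨rfl, hV, hV'⟩ := hρ
  obtain ⟨rfl, hW, hW'⟩ := hσ
  have e1 : trace ((W * Y * Vᴴ)ᴴ * (V * diagonal (fun i => (p i : ℂ)) * Vᴴ))
      = trace (Yᴴ * ((Wᴴ * V) * diagonal (fun i => (p i : ℂ)))) := by
    simp only [conjTranspose_mul, conjTranspose_conjTranspose, Matrix.mul_assoc]
    rw [trace_mul_comm]
    simp only [Matrix.mul_assoc, hV, Matrix.mul_one]
  have e2 : trace ((W * Y * Vᴴ) * (W * Y * Vᴴ)ᴴ * (W * diagonal (fun i => (q i : ℂ)) * Wᴴ))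
      = trace (Yᴴ * (diagonal (fun i => (q i : ℂ)) * Y)) := by
    simp only [conjTranspose_mul, conjTranspose_conjTranspose, Matrix.mul_assoc]
    rw [trace_mul_comm]
    simp only [Matrix.mul_assoc, hW, Matrix.mul_one]
    rw [← Matrix.mul_assoc Vᴴ V, hV, Matrix.one_mul, ← Matrix.mul_assoc Wᴴ W, hW, Matrix.one_mul,
      trace_mul_comm]
    simp only [Matrix.mul_assoc]
  have e3 : trace ((W * Y * Vᴴ)ᴴ * (W * Y * Vᴴ) * (V * diagonal (fun i => (p i : ℂ)) * Vᴴ))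
      = trace (Yᴴ * (Y * diagonal (fun i => (p i : ℂ)))) := by
    simp only [conjTranspose_mul, conjTranspose_conjTranspose, Matrix.mul_assoc]
    rw [trace_mul_comm]
    simp only [Matrix.mul_assoc, hV, Matrix.mul_one]
    rw [← Matrix.mul_assoc Vᴴ V, hV, Matrix.one_mul, ← Matrix.mul_assoc Wᴴ W, hW, Matrix.one_mul]
  have g : ∀ Z : Matrix k m ℂ, (trace (Yᴴ * Z)).re = ∑ j, ∑ i, (star (Y j i) * Z j i).re := by
    intro Z
    rw [Finset.sum_comm]
    simp only [trace, diag, Matrix.mul_apply, conjTranspose_apply, Complex.re_sum]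
  rw [Qf, e1, e2, e3, g, g, g, Finset.mul_sum, Finset.mul_sum, ← Finset.sum_sub_distrib,
    ← Finset.sum_sub_distrib]
  refine Finset.sum_congr rfl fun j _ => ?_
  rw [Finset.mul_sum, Finset.mul_sum, ← Finset.sum_sub_distrib,
    ← Finset.sum_sub_distrib]
  refine Finset.sum_congr rfl fun i _ => ?_
  rw [mul_diagonal, mul_diagonal, diagonal_mul]
  simp [Complex.normSq_apply]
  ring

lemma Qf_le {ρ σ : Matrix n n ℂ} {V : Matrix n m ℂ} {W : Matrix n k ℂ} {p : m → ℝ} {q : k → ℝ}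
    (hρ : SD ρ V p) (hσ : SD σ W q) {t : ℝ} (ht : 0 ≤ t) (hp : ∀ i, 0 ≤ p i) (hq : ∀ j, 0 < q j)
    (X : Matrix n n ℂ) : Qf ρ σ t X ≤ Ff t p q (Wᴴ * V) := by
  have hX : X = W * (Wᴴ * X * V) * Vᴴ := by
    have h1 : W * (Wᴴ * X * V) * Vᴴ = (W * Wᴴ) * X * (V * Vᴴ) := by
      simp only [Matrix.mul_assoc]
    rw [h1, hσ.2.2, hρ.2.2]; simp
  rw [hX, Qf_eq hρ hσ, Ff]
  refine Finset.sum_le_sum fun j _ => Finset.sum_le_sum fun i _ => ?_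
  generalize (Wᴴ * X * V) j i = y
  generalize (Wᴴ * V) j i = u
  have hc : 0 < q j + t * p i := add_pos_of_pos_of_nonneg (hq j) (mul_nonneg ht (hp i))
  generalize q j + t * p i = c at hc
  rw [← mul_div_assoc, le_div_iff₀ hc]
  simp [Complex.normSq_apply]
  nlinarith [sq_nonneg (c * y.re - p i * u.re), sq_nonneg (c * y.im - p i * u.im)]

lemma Qf_attain {ρ σ : Matrix n n ℂ} {V : Matrix n m ℂ} {W : Matrix n k ℂ} {p : m → ℝ} {q : k → ℝ}
    (hρ : SD ρ V p) (hσ : SD σ W q) {t : ℝ} (ht : 0 ≤ t) (hp : ∀ i, 0 ≤ p i) (hq : ∀ j, 0 < q j) :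
    ∃ X, Qf ρ σ t X = Ff t p q (Wᴴ * V) := by
  refine ⟨W * (Matrix.of fun j i => (Wᴴ * V) j i * ((p i / (q j + t * p i) : ℝ) : ℂ)) * Vᴴ, ?_⟩
  rw [Qf_eq hρ hσ, Ff]
  refine Finset.sum_congr rfl fun j _ => Finset.sum_congr rfl fun i _ => ?_
  rw [of_apply]
  generalize (Wᴴ * V) j i = u
  have hc : 0 < q j + t * p i := add_pos_of_pos_of_nonneg (hq j) (mul_nonneg ht (hp i))
  generalize q j + t * p i = c at hc
  rw [Complex.normSq_mul, Complex.normSq_ofReal]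
  simp only [Complex.star_def, map_mul, Complex.conj_ofReal]
  have : ((starRingEnd ℂ) u * ((p i / c : ℝ) : ℂ) * u).re = Complex.normSq u * (p i / c) := by
    simp [Complex.normSq_apply, -Complex.ofReal_div]; ring
  rw [this]
  field_simp
  ring

/-- partial trace over left factor -/
def trL (ρ : Matrix (k × n) (k × n) ℂ) : Matrix n n ℂ := fun x y => ∑ a, ρ (a, x) (a, y)

lemma trace_trL (ρ : Matrix (k × n) (k × n) ℂ) (Z : Matrix n n ℂ) :
    trace (((1 : Matrix k k ℂ) ⊗ₖ Z) * ρ) = trace (Z * trL ρ) := by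
  simp only [trace, diag, Matrix.mul_apply, kroneckerMap_apply, Fintype.sum_prod_type, trL,
    Matrix.one_apply, ite_mul, one_mul, zero_mul]
  simp only [Finset.mul_sum]
  rw [Finset.sum_comm]
  refine Finset.sum_congr rfl fun x _ => ?_
  rw [Finset.sum_comm (s := (Finset.univ : Finset n))]
  refine Finset.sum_congr rfl fun a _ => ?_
  rw [Finset.sum_comm]
  simp

lemma Qf_trL (ρ σ : Matrix (k × n) (k × n) ℂ) (t : ℝ) (X : Matrix n n ℂ) :
    Qf ρ σ t ((1 : Matrix k k ℂ) ⊗ₖ X) = Qf (trL ρ) (trL σ) t X := by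
  unfold Qf
  have h : ((1 : Matrix k k ℂ) ⊗ₖ X)ᴴ = (1 : Matrix k k ℂ) ⊗ₖ Xᴴ := by
    rw [conjTranspose_kronecker, conjTranspose_one]
  rw [h, ← mul_kronecker_mul, ← mul_kronecker_mul, Matrix.one_mul, trace_trL, trace_trL, trace_trL]

variable {m' k' : Type} [Fintype m'] [DecidableEq m'] [Fintype k'] [DecidableEq k']

lemma Ff_mono {ρ σ : Matrix (l × n) (l × n) ℂ} {V : Matrix (l × n) m ℂ} {W : Matrix (l × n) k ℂ}
    {p : m → ℝ} {q : k → ℝ} (hρ : SD ρ V p) (hσ : SD σ W q)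
    {V' : Matrix n m' ℂ} {W' : Matrix n k' ℂ}
    {p' : m' → ℝ} {q' : k' → ℝ} (hρ' : SD (trL ρ) V' p') (hσ' : SD (trL σ) W' q')
    (hp : ∀ i, 0 ≤ p i) (hq : ∀ j, 0 < q j) (hp' : ∀ i, 0 ≤ p' i) (hq' : ∀ j, 0 < q' j)
    {t : ℝ} (ht : 0 ≤ t) : Ff t p' q' (W'ᴴ * V') ≤ Ff t p q (Wᴴ * V) := by
  obtain ⟨X, hX⟩ := Qf_attain hρ' hσ' ht hp' hq'
  rw [← hX, ← Qf_trL]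
  exact Qf_le hρ hσ ht hp hq _

noncomputable def Gf (t : ℝ) (p : m → ℝ) (q : k → ℝ) (U : Matrix k m ℂ) : ℝ :=
  ∑ j, ∑ i, Complex.normSq (U j i) * (p i * (Real.log (q j + t * p i) - Real.log (q j)))

lemma Gf_deriv {p : m → ℝ} {q : k → ℝ} (U : Matrix k m ℂ)
    (hp : ∀ i, 0 ≤ p i) (hq : ∀ j, 0 < q j) {t : ℝ} (ht : 0 ≤ t) :
    HasDerivAt (fun t => Gf t p q U) (Ff t p q U) t := by
  unfold Gf Ff
  refine HasDerivAt.fun_sum fun j _ => HasDerivAt.fun_sum fun i _ => ?_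
  have hc : 0 < q j + t * p i := add_pos_of_pos_of_nonneg (hq j) (mul_nonneg ht (hp i))
  have h1 : HasDerivAt (fun t : ℝ => q j + t * p i) (1 * p i) t :=
    ((hasDerivAt_id t).mul_const (p i)).const_add (q j)
  have h2 := (((h1.log hc.ne').sub_const (Real.log (q j))).const_mul (p i)).const_mul
    (Complex.normSq (U j i))
  refine h2.congr_deriv ?_
  ring

lemma Gf_mono {p : m → ℝ} {q : k → ℝ} (U : Matrix k m ℂ)
    {p' : m' → ℝ} {q' : k' → ℝ} (U' : Matrix k' m' ℂ)
    (hp : ∀ i, 0 ≤ p i) (hq : ∀ j, 0 < q j) (hp' : ∀ i, 0 ≤ p' i) (hq' : ∀ j, 0 < q' j)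
    (h : ∀ t, 0 ≤ t → Ff t p' q' U' ≤ Ff t p q U) {t : ℝ} (ht : 0 ≤ t) :
    Gf t p' q' U' ≤ Gf t p q U := by
  have hd : ∀ t, 0 ≤ t → HasDerivAt (fun t => Gf t p q U - Gf t p' q' U')
      (Ff t p q U - Ff t p' q' U') t := fun t ht =>
    (Gf_deriv U hp hq ht).sub (Gf_deriv U' hp' hq' ht)
  have hm : MonotoneOn (fun t => Gf t p q U - Gf t p' q' U') (Set.Ici 0) := by
    apply monotoneOn_of_deriv_nonneg (convex_Ici 0)
    · exact fun t ht => (hd t ht).continuousAt.continuousWithinAt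
    · intro t ht
      rw [interior_Ici] at ht
      exact (hd t (le_of_lt ht)).differentiableAt.differentiableWithinAt
    · intro t ht
      rw [interior_Ici] at ht
      rw [(hd t (le_of_lt ht)).deriv]
      exact sub_nonneg.2 (h t (le_of_lt ht))
  have := hm (Set.mem_Ici.2 le_rfl) (Set.mem_Ici.2 ht) ht
  simp [Gf] at this
  simpa [Gf] using this

noncomputable def Df (p : m → ℝ) (q : k → ℝ) (U : Matrix k m ℂ) : ℝ :=
  ∑ j, ∑ i, Complex.normSq (U j i) * (p i * (Real.log (p i) - Real.log (q j)))

open Filter Topology in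
lemma Gf_lim {p : m → ℝ} {q : k → ℝ} (U : Matrix k m ℂ)
    (hp : ∀ i, 0 ≤ p i) :
    Tendsto (fun t => Gf t p q U - (∑ j, ∑ i, Complex.normSq (U j i) * p i) * Real.log t)
      atTop (𝓝 (Df p q U)) := by
  have : (fun t => Gf t p q U - (∑ j, ∑ i, Complex.normSq (U j i) * p i) * Real.log t)
    = fun t => ∑ j, ∑ i, Complex.normSq (U j i) *
       (p i * (Real.log (q j + t * p i) - Real.log t - Real.log (q j))) := by
    funext t
    simp only [Gf, Finset.sum_mul, ← Finset.sum_sub_distrib]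
    refine Finset.sum_congr rfl fun j _ => Finset.sum_congr rfl fun i _ => ?_
    ring
  rw [this]
  refine tendsto_finsetSum _ fun j _ => tendsto_finsetSum _ fun i _ => ?_
  refine Tendsto.const_mul _ ?_
  rcases (hp i).eq_or_lt with h0 | h0
  · simp [← h0]
  refine Tendsto.const_mul _ (Tendsto.sub_const ?_ _)
  have h1 : Tendsto (fun t : ℝ => q j * t⁻¹ + p i) atTop (𝓝 (q j * 0 + p i)) :=
    (tendsto_inv_atTop_zero.const_mul _).add_const _
  rw [mul_zero, zero_add] at h1
  have h2 := h1.log h0.ne'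
  refine h2.congr' ?_
  filter_upwards [eventually_gt_atTop 0, h1.eventually (lt_mem_nhds h0)] with t ht ht2
  have : q j + t * p i = (q j * t⁻¹ + p i) * t := by field_simp
  rw [this, Real.log_mul ht2.ne' ht.ne']
  ring

open Filter Topology in
lemma Df_mono {ρ σ : Matrix (l × n) (l × n) ℂ} {V : Matrix (l × n) m ℂ} {W : Matrix (l × n) k ℂ}
    {p : m → ℝ} {q : k → ℝ} (hρ : SD ρ V p) (hσ : SD σ W q)
    {V' : Matrix n m' ℂ} {W' : Matrix n k' ℂ}
    {p' : m' → ℝ} {q' : k' → ℝ} (hρ' : SD (trL ρ) V' p') (hσ' : SD (trL σ) W' q')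
    (hp : ∀ i, 0 ≤ p i) (hq : ∀ j, 0 < q j) (hp' : ∀ i, 0 ≤ p' i) (hq' : ∀ j, 0 < q' j)
    (hs : ∑ j, ∑ i, Complex.normSq ((W'ᴴ * V') j i) * p' i
      = ∑ j, ∑ i, Complex.normSq ((Wᴴ * V) j i) * p i) :
    Df p' q' (W'ᴴ * V') ≤ Df p q (Wᴴ * V) := by
  refine le_of_tendsto_of_tendsto (Gf_lim _ hp') (Gf_lim _ hp) ?_
  filter_upwards [eventually_ge_atTop 0] with t ht
  rw [hs]
  have := Gf_mono (Wᴴ * V) (W'ᴴ * V') hp hq hp' hq'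
    (fun t ht => Ff_mono hρ hσ hρ' hσ' hp hq hp' hq' ht) ht
  linarith

/-- weighted sums -/
lemma SD_sum_left {ρ σ : Matrix n n ℂ} {V : Matrix n m ℂ} {W : Matrix n k ℂ} {p : m → ℝ} {q : k → ℝ}
    (hρ : SD ρ V p) (hσ : SD σ W q) (f : m → ℝ) :
    ∑ j, ∑ i, Complex.normSq ((Wᴴ * V) j i) * f i = ∑ i, f i := by
  rw [Finset.sum_comm]
  refine Finset.sum_congr rfl fun i _ => ?_
  rw [← Finset.sum_mul]
  have h : (Wᴴ * V)ᴴ * (Wᴴ * V) = 1 := by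
    rw [conjTranspose_mul, conjTranspose_conjTranspose, Matrix.mul_assoc, ← Matrix.mul_assoc W,
      hσ.2.2, Matrix.one_mul, hρ.2.1]
  have h1 := congrFun (congrFun h i) i
  rw [Matrix.mul_apply] at h1
  simp only [conjTranspose_apply, Matrix.one_apply_eq, Complex.star_def,
    ← Complex.normSq_eq_conj_mul_self] at h1
  have h2 : ∑ j, Complex.normSq ((Wᴴ * V) j i) = 1 := by exact_mod_cast h1
  rw [h2, one_mul]

lemma SD_sum_right {ρ : Matrix n n ℂ} {V : Matrix n m ℂ} {W : Matrix n k ℂ} {p : m → ℝ}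
    (hρ : SD ρ V p) (j : k) :
    ((∑ i, Complex.normSq ((Wᴴ * V) j i) * p i : ℝ) : ℂ) = (Wᴴ * ρ * W) j j := by
  have h : Wᴴ * ρ * W = (Wᴴ * V) * diagonal (fun i => (p i : ℂ)) * (Wᴴ * V)ᴴ := by
    rw [hρ.1, conjTranspose_mul, conjTranspose_conjTranspose]
    simp only [Matrix.mul_assoc]
  rw [h, Matrix.mul_apply]
  push_cast
  refine Finset.sum_congr rfl fun i _ => ?_
  rw [mul_diagonal, conjTranspose_apply, Complex.normSq_eq_conj_mul_self, Complex.star_def]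
  ring

lemma SD_trace {ρ : Matrix n n ℂ} {V : Matrix n m ℂ} {p : m → ℝ} (hρ : SD ρ V p) :
    trace ρ = ((∑ i, p i : ℝ) : ℂ) := by
  rw [hρ.1, trace_mul_comm, ← Matrix.mul_assoc, hρ.2.1, Matrix.one_mul, trace_diagonal]
  push_cast; rfl

lemma SD_submatrix {ρ : Matrix n n ℂ} {V : Matrix n m ℂ} {p : m → ℝ} (hρ : SD ρ V p) (e : l ≃ n) :
    SD (ρ.submatrix e e) (V.submatrix e id) p := by
  refine ⟨?_, ?_, ?_⟩
  · rw [hρ.1, conjTranspose_submatrix]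
    ext x y
    simp [Matrix.mul_apply]
  · rw [conjTranspose_submatrix, submatrix_mul_equiv, hρ.2.1, submatrix_id_id]
  · have : V.submatrix e id * (V.submatrix e id)ᴴ = (V * Vᴴ).submatrix e e := by
      ext x y
      simp [Matrix.mul_apply]
    rw [this, hρ.2.2, submatrix_one_equiv]

lemma SD_kron {σ : Matrix n n ℂ} {W : Matrix n m ℂ} {q : m → ℝ} (hσ : SD σ W q) :
    SD (σ ⊗ₖ (1 : Matrix k k ℂ)) (W ⊗ₖ (1 : Matrix k k ℂ)) (fun j => q j.1) := by
  have hc : (W ⊗ₖ (1 : Matrix k k ℂ))ᴴ = Wᴴ ⊗ₖ (1 : Matrix k k ℂ) := by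
    rw [conjTranspose_kronecker, conjTranspose_one]
  have hd : diagonal (fun j : m × k => ((q j.1 : ℝ) : ℂ))
      = diagonal (fun i => (q i : ℂ)) ⊗ₖ (1 : Matrix k k ℂ) := by
    rw [← diagonal_one, diagonal_kronecker_diagonal]; simp
  refine ⟨?_, ?_, ?_⟩
  · rw [hc, hd, ← mul_kronecker_mul, ← mul_kronecker_mul, ← hσ.1]; simp
  · rw [hc, ← mul_kronecker_mul, hσ.2.1]; simp
  · rw [hc, ← mul_kronecker_mul, hσ.2.2]; simp

lemma SD_add {σ : Matrix n n ℂ} {W : Matrix n m ℂ} {q : m → ℝ} (hσ : SD σ W q) (ε : ℝ) :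
    SD (σ + (ε : ℂ) • (1 : Matrix n n ℂ)) W (fun j => q j + ε) := by
  refine ⟨?_, hσ.2.1, hσ.2.2⟩
  have hd : diagonal (fun j : m => ((q j + ε : ℝ) : ℂ))
      = diagonal (fun i => (q i : ℂ)) + (ε : ℂ) • (1 : Matrix m m ℂ) := by
    ext x y; by_cases h : x = y <;> simp [h]
  rw [hd, Matrix.mul_add, Matrix.add_mul, ← hσ.1, Matrix.mul_smul, Matrix.smul_mul, Matrix.mul_one,
    hσ.2.2]

/-- partial trace over right factor -/
def trR (ρ : Matrix (n × k) (n × k) ℂ) : Matrix n n ℂ := fun x y => ∑ c, ρ (x, c) (y, c)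

lemma Df_cond {ρ : Matrix (n × l) (n × l) ℂ} {V : Matrix (n × l) m ℂ} {p : m → ℝ}
    {W : Matrix n k ℂ} {q : k → ℝ} (hρ : SD ρ V p) (hσ : SD (trR ρ) W q) (ε : ℝ) :
    Df p (fun j : k × l => q j.1 + ε) ((W ⊗ₖ (1 : Matrix l l ℂ))ᴴ * V)
      = ∑ i, p i * Real.log (p i) - ∑ j, q j * Real.log (q j + ε) := by
  have h1 := SD_sum_left hρ (SD_kron (k := l) hσ) (fun i => p i * Real.log (p i))
  have h2 : ∀ j, ∑ c, ∑ i, Complex.normSq (((W ⊗ₖ (1 : Matrix l l ℂ))ᴴ * V) (j, c) i) * p i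
      = q j := by
    intro j
    have h3 : ((∑ c, ∑ i, Complex.normSq (((W ⊗ₖ (1 : Matrix l l ℂ))ᴴ * V) (j, c) i) * p i : ℝ) : ℂ)
      = ((q j : ℝ) : ℂ) := by
      rw [Complex.ofReal_sum]
      simp only [SD_sum_right hρ]
      have h4 : Wᴴ * trR ρ * W = diagonal (fun i => (q i : ℂ)) := by
        rw [hσ.1]
        have : Wᴴ * (W * diagonal (fun i => (q i : ℂ)) * Wᴴ) * W
          = (Wᴴ * W) * diagonal (fun i => (q i : ℂ)) * (Wᴴ * W) := by
          simp only [Matrix.mul_assoc]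
        rw [this, hσ.2.1]; simp
      have h5 := congrFun (congrFun h4 j) j
      rw [diagonal_apply_eq] at h5
      rw [← h5]
      simp only [Matrix.mul_apply, conjTranspose_apply, kroneckerMap_apply, Fintype.sum_prod_type,
        trR, Matrix.one_apply, mul_ite, mul_one, mul_zero, Finset.sum_ite_eq',
        Finset.mem_univ, if_true, apply_ite star, star_zero, ite_mul, zero_mul, Finset.mul_sum,
        Finset.sum_mul]
      rw [Finset.sum_comm]
      refine Finset.sum_congr rfl fun x _ => ?_
      rw [Finset.sum_comm]
    exact_mod_cast h3
  rw [← h1]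
  have h6 : ∑ j, q j * Real.log (q j + ε) = ∑ j : k × l, ∑ i,
      Complex.normSq (((W ⊗ₖ (1 : Matrix l l ℂ))ᴴ * V) j i) * (p i * Real.log (q j.1 + ε)) := by
    rw [Fintype.sum_prod_type]
    refine Finset.sum_congr rfl fun j _ => ?_
    rw [← h2 j, Finset.sum_mul, h2 j]
    refine Finset.sum_congr rfl fun c _ => ?_
    rw [Finset.sum_mul]
    refine Finset.sum_congr rfl fun i _ => ?_
    ring
  rw [h6, Df, ← Finset.sum_sub_distrib]
  refine Finset.sum_congr rfl fun j _ => ?_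
  rw [← Finset.sum_sub_distrib]
  refine Finset.sum_congr rfl fun i _ => ?_
  ring

lemma trace_trL' (ρ : Matrix (k × n) (k × n) ℂ) : trace (trL ρ) = trace ρ := by
  simp only [trace, diag, trL, Fintype.sum_prod_type]
  rw [Finset.sum_comm]

variable {α β γ : Type} [Fintype α] [DecidableEq α] [Fintype β] [DecidableEq β]
  [Fintype γ] [DecidableEq γ]

open Filter Topology in
lemma ssa_sd [Nonempty α] {ρ : Matrix ((α × β) × γ) ((α × β) × γ) ℂ}
    {V : Matrix ((α × β) × γ) m ℂ} {p : m → ℝ} (hρ : SD ρ V p) (hp : ∀ i, 0 ≤ p i)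
    {W : Matrix (α × β) k ℂ} {q : k → ℝ} (hAB : SD (trR ρ) W q) (hq : ∀ i, 0 ≤ q i)
    {Z : Matrix (β × γ) m' ℂ} {r : m' → ℝ}
    (hBC : SD (trL (ρ.submatrix (Equiv.prodAssoc α β γ).symm (Equiv.prodAssoc α β γ).symm)) Z r)
    (hr : ∀ i, 0 ≤ r i)
    {Y : Matrix β k' ℂ} {s : k' → ℝ} (hB : SD (trL (trR ρ)) Y s) (hs : ∀ i, 0 ≤ s i) :
    ∑ i, r i * Real.log (r i) - ∑ i, s i * Real.log (s i)
      ≤ ∑ i, p i * Real.log (p i) - ∑ i, q i * Real.log (q i) := by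
  set e := (Equiv.prodAssoc α β γ).symm with he
  obtain ⟨N, hN⟩ : ∃ N : ℝ, N = (Fintype.card α : ℝ) := ⟨_, rfl⟩
  have hNpos : 0 < N := by rw [hN]; exact_mod_cast Fintype.card_pos
  have hB2 : SD (trR (trL (ρ.submatrix e e))) Y s := by
    convert hB using 1
    ext x y
    simp only [trR, trL, submatrix_apply]
    rw [Finset.sum_comm]
    rfl
  have key : ∀ ε : ℝ, 0 < ε → ∑ i, r i * Real.log (r i) - ∑ i, s i * Real.log (s i + ε * N)
      ≤ ∑ i, p i * Real.log (p i) - ∑ i, q i * Real.log (q i + ε) := by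
    intro ε hε
    rw [← Df_cond hρ hAB, ← Df_cond hBC hB2]
    have hσ := SD_kron (k := γ) (SD_add hAB ε)
    have hσ' := SD_kron (k := γ) (SD_add hB (ε * N))
    have hρe := SD_submatrix hρ e
    have hσe := SD_submatrix hσ e
    have hU : ((W ⊗ₖ (1 : Matrix γ γ ℂ)).submatrix e id)ᴴ * (V.submatrix e id)
        = (W ⊗ₖ (1 : Matrix γ γ ℂ))ᴴ * V := by
      rw [conjTranspose_submatrix, submatrix_mul_equiv, submatrix_id_id]
    rw [← hU]
    have htr : trL (((trR ρ + (ε : ℂ) • (1 : Matrix (α × β) (α × β) ℂ)) ⊗ₖ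
        (1 : Matrix γ γ ℂ)).submatrix e e)
        = (trL (trR ρ) + ((ε * N : ℝ) : ℂ) • (1 : Matrix β β ℂ)) ⊗ₖ (1 : Matrix γ γ ℂ) := by
      ext ⟨b, c⟩ ⟨b', c'⟩
      simp only [trL, submatrix_apply, he, Equiv.prodAssoc_symm_apply, kroneckerMap_apply,
        Matrix.add_apply, Matrix.smul_apply, Matrix.one_apply, Prod.mk.injEq, true_and,
        smul_eq_mul]
      have aux : ∀ (f : α → ℂ) (u g : ℂ), ∑ x, (f x + u) * g
          = (∑ x, f x + Fintype.card α * u) * g := by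
        intro f u g
        rw [← Finset.sum_mul, Finset.sum_add_distrib, Finset.sum_const, Finset.card_univ,
          nsmul_eq_mul]
      have := aux (fun x => trR ρ (x, b) (x, b')) (ε * if b = b' then 1 else 0)
        (if c = c' then 1 else 0)
      refine Eq.trans (Finset.sum_congr rfl fun x _ => ?_) (this.trans ?_)
      · by_cases hb : b = b' <;> simp [hb]
      · rw [hN]
        push_cast
        ring
    rw [← htr] at hσ'
    refine Df_mono hρe hσe hBC hσ' hp (fun j => ?_) hr (fun j => ?_) ?_
    · have := hq j.1
      positivity
    · have := hs j.1
      positivity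
    · rw [SD_sum_left hBC hσ', SD_sum_left hρe hσe]
      have h1 := SD_trace hBC
      rw [trace_trL', SD_trace hρe] at h1
      exact_mod_cast h1.symm
  have lim : ∀ {κ : Type} [Fintype κ] (q : κ → ℝ) (c : ℝ),
      Tendsto (fun ε : ℝ => ∑ i, q i * Real.log (q i + ε * c)) (𝓝[>] 0)
        (𝓝 (∑ i, q i * Real.log (q i))) := by
    intro κ _ q c
    refine tendsto_finsetSum _ fun i _ => ?_
    by_cases h0 : q i = 0
    · simp [h0]
    refine Tendsto.const_mul _ (Tendsto.log ?_ h0)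
    have : Tendsto (fun ε : ℝ => q i + ε * c) (𝓝 0) (𝓝 (q i + 0 * c)) :=
      (tendsto_id.mul_const c).const_add _
    rw [zero_mul, add_zero] at this
    exact this.mono_left nhdsWithin_le_nhds
  have l2 := lim q 1
  simp only [mul_one] at l2
  refine le_of_tendsto_of_tendsto ((lim s N).const_sub _) (l2.const_sub _) ?_
  filter_upwards [self_mem_nhdsWithin] with ε hε
  exact key ε hε

lemma exists_SD {ρ : Matrix n n ℂ} (hρ : ρ.PosSemidef) :
    ∃ (V : Matrix n n ℂ) (p : n → ℝ), SD ρ V p ∧ (∀ i, 0 ≤ p i) ∧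
      vnEntropy ρ = - (∑ i, p i * Real.log (p i)) / Real.log 2 := by
  refine ⟨hρ.1.eigenvectorUnitary, hρ.1.eigenvalues, ⟨?_, ?_, ?_⟩, hρ.eigenvalues_nonneg, ?_⟩
  · exact hρ.1.spectral_theorem
  · exact Unitary.coe_star_mul_self hρ.1.eigenvectorUnitary
  · exact Unitary.coe_mul_star_self hρ.1.eigenvectorUnitary
  · rw [vnEntropy, dif_pos hρ.1, neg_div, Finset.sum_div, ← Finset.sum_neg_distrib]
    refine Finset.sum_congr rfl fun i _ => ?_
    rw [negxlog2, Real.logb, mul_div_assoc]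

lemma trL_psd {ρ : Matrix (k × n) (k × n) ℂ} (h : ρ.PosSemidef) : (trL ρ).PosSemidef := by
  have : trL ρ = ∑ a, ρ.submatrix (fun x => (a, x)) (fun x => (a, x)) := by
    ext x y; simp [trL, Matrix.sum_apply]
  rw [this]
  exact posSemidef_sum _ fun a _ => h.submatrix _

lemma trR_psd {ρ : Matrix (n × k) (n × k) ℂ} (h : ρ.PosSemidef) : (trR ρ).PosSemidef := by
  have : trR ρ = ∑ a, ρ.submatrix (fun x => (x, a)) (fun x => (x, a)) := by
    ext x y; simp [trR, Matrix.sum_apply]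
  rw [this]
  exact posSemidef_sum _ fun a _ => h.submatrix _

lemma ssa [Nonempty α] {ρ : Matrix ((α × β) × γ) ((α × β) × γ) ℂ} (h : ρ.PosSemidef) :
    vnEntropy ρ + vnEntropy (trL (trR ρ)) ≤ vnEntropy (trR ρ) +
      vnEntropy (trL (ρ.submatrix (Equiv.prodAssoc α β γ).symm (Equiv.prodAssoc α β γ).symm)) := by
  obtain ⟨V, p, h1, h2, h3⟩ := exists_SD h
  obtain ⟨W, q, i1, i2, i3⟩ := exists_SD (trR_psd h)
  obtain ⟨Y, s, j1, j2, j3⟩ := exists_SD (trL_psd (trR_psd h))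
  obtain ⟨Z, r, k1, k2, k3⟩ := exists_SD (trL_psd (h.submatrix (Equiv.prodAssoc α β γ).symm))
  have := ssa_sd h1 h2 i1 i2 k1 k2 j1 j2
  rw [h3, i3, j3, k3, ← add_div, ← add_div]
  have := Real.log_pos one_lt_two
  refine div_le_div_of_nonneg_right ?_ this.le
  linarith

lemma vnEntropy_submatrix (ρ : Matrix n n ℂ) (e : m ≃ n) (h : ρ.PosSemidef) :
    vnEntropy (ρ.submatrix e e) = vnEntropy ρ := by
  have h2 : (ρ.submatrix e e).IsHermitian := h.1.submatrix _
  rw [vnEntropy, vnEntropy, dif_pos h2, dif_pos h.1]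
  have hc : (ρ.submatrix e e).charpoly = ρ.charpoly := Matrix.charpoly_reindex e.symm ρ
  have r1 := h2.roots_charpoly_eq_eigenvalues
  have r2 := h.1.roots_charpoly_eq_eigenvalues
  rw [hc, r2] at r1
  have := congrArg (fun s : Multiset ℂ => (s.map (fun z => negxlog2 z.re)).sum) r1
  simpa using this.symm

end core

section fin
set_option linter.unusedSectionVars false
variable {ι : Type} [Fintype ι] [DecidableEq ι] {d : ι → Type}
  [∀ i, Fintype (d i)] [∀ i, DecidableEq (d i)]

lemma pTr_psd {ρ : Matrix (∀ i, d i) (∀ i, d i) ℂ} (h : ρ.PosSemidef) (s : Finset ι) :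
    (pTr ρ s).PosSemidef := by
  have : pTr ρ s = ∑ z, ρ.submatrix (fun x => combine s x z) (fun x => combine s x z) := by
    ext x y; simp [pTr, Matrix.sum_apply]
  rw [this]
  exact posSemidef_sum _ fun a _ => h.submatrix _

lemma Sv_eq {ρ : Matrix (∀ i, d i) (∀ i, d i) ℂ} (h : ρ.PosSemidef) (s : Finset ι)
    {κ μ : Type} [Fintype κ] [DecidableEq κ] [Fintype μ]
    (e : ((i : {j // j ∈ s}) → d i.1) ≃ κ) (f : ((i : {j // j ∉ s}) → d i.1) ≃ μ)
    (g : κ → μ → ∀ i, d i) (hg : ∀ x z, g (e x) (f z) = combine s x z) (R : Matrix κ κ ℂ)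
    (hR : ∀ x y, R x y = ∑ z, ρ (g x z) (g y z)) :
    vnEntropy R = Sv ρ s := by
  have : R = (pTr ρ s).submatrix e.symm e.symm := by
    ext x y
    rw [hR, submatrix_apply, pTr, ← f.sum_comp]
    refine Finset.sum_congr rfl fun z _ => ?_
    rw [← hg, ← hg]; simp
  rw [this, vnEntropy_submatrix _ _ (pTr_psd h s), Sv]

abbrev Bt (d : ι → Type) (i l : ι) : Type :=
  (j : {j // j ∈ (Finset.univ \ {i, l} : Finset ι)}) → d j.1

def build (i l : ι) (x : (d i × Bt d i l) × d l) : ∀ j, d j := fun j =>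
  if h : j = i then h ▸ x.1.1 else if h' : j = l then h' ▸ x.2 else x.1.2 ⟨j, by simp [h, h']⟩

lemma build_i (i l : ι) (x : (d i × Bt d i l) × d l) : build i l x i = x.1.1 := by
  simp [build]

lemma build_l {i l : ι} (hil : i ≠ l) (x : (d i × Bt d i l) × d l) : build i l x l = x.2 := by
  simp [build, hil.symm]

lemma build_b (i l : ι) (x : (d i × Bt d i l) × d l) (j : ι) (h : j ≠ i) (h' : j ≠ l) :
    build i l x j = x.1.2 ⟨j, by simp [h, h']⟩ := by
  simp [build, h, h']

lemma eq_build {i l : ι} (hil : i ≠ l) (x : (d i × Bt d i l) × d l) (w : ∀ j, d j)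
    (h1 : x.1.1 = w i) (h2 : x.2 = w l) (h3 : ∀ j (hj : j ∈ (Finset.univ \ {i, l} : Finset ι)),
      x.1.2 ⟨j, hj⟩ = w j) : build i l x = w := by
  funext j
  by_cases h : j = i
  · subst h; rw [build_i, h1]
  by_cases h' : j = l
  · subst h'; rw [build_l hil, h2]
  rw [build_b i l x j h h', h3]

lemma ssa_fin {ρ : Matrix (∀ i, d i) (∀ i, d i) ℂ} (h : ρ.PosSemidef) [Nonempty (∀ i, d i)]
    {i l : ι} (hil : i ≠ l) :
    Sv ρ Finset.univ + Sv ρ (Finset.univ \ {i, l}) ≤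
      Sv ρ (Finset.univ \ {l}) + Sv ρ (Finset.univ \ {i}) := by
  obtain ⟨w0⟩ := ‹Nonempty (∀ i, d i)›
  haveI : Nonempty (d i) := ⟨w0 i⟩
  have hne : l ≠ i := hil.symm
  let R : Matrix ((d i × Bt d i l) × d l) ((d i × Bt d i l) × d l) ℂ :=
    ρ.submatrix (build i l) (build i l)
  have hR : R.PosSemidef := h.submatrix _
  have main := ssa hR
  have hmem : ∀ j, j ∈ (Finset.univ \ {i, l} : Finset ι) → j ≠ i ∧ j ≠ l := by
    intro j hj; simpa using hj
  have E1 : vnEntropy R = Sv ρ Finset.univ := by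
    refine Sv_eq h Finset.univ (μ := Unit)
      (Equiv.ofBijective (fun x => ((x ⟨i, by simp⟩, fun j : {j // j ∈ (Finset.univ \ {i, l} : Finset ι)} => x ⟨j.1, by simp⟩), x ⟨l, by simp⟩)) ⟨?_, ?_⟩)
      (Equiv.ofBijective (fun _ => ()) ⟨?_, ?_⟩)
      (fun x _ => build i l x) ?_ R ?_
    · intro x y hxy
      simp only [Prod.mk.injEq] at hxy
      obtain ⟨⟨a, b⟩, c⟩ := hxy
      funext ⟨j, hj⟩
      by_cases h1 : j = i
      · subst h1; exact a
      by_cases h2 : j = l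
      · subst h2; exact c
      exact congrFun b ⟨j, by simp [h1, h2]⟩
    · intro x
      refine ⟨fun j => build i l x j.1, ?_⟩
      refine Prod.ext (Prod.ext (build_i _ _ _) ?_) (build_l hil _)
      funext j
      exact build_b i l x j.1 (hmem _ j.2).1 (hmem _ j.2).2
    · intro x y _
      funext j
      exact absurd (Finset.mem_univ _) j.2
    · intro _
      exact ⟨fun j => absurd (Finset.mem_univ _) j.2, rfl⟩
    · intro x z
      refine eq_build hil _ _ ?_ ?_ ?_
      · simp [combine]; rfl
      · simp [combine]; rfl
      · intro j hj
        simp [combine]; rfl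
    · intro x y; simp [R]
  have E2 : vnEntropy (trR R) = Sv ρ (Finset.univ \ {l}) := by
    refine Sv_eq h (Finset.univ \ {l}) (μ := d l)
      (Equiv.ofBijective (fun x => (x ⟨i, by simp [hil]⟩,
        fun j : {j // j ∈ (Finset.univ \ {i, l} : Finset ι)} => x ⟨j.1, by simp [(hmem _ j.2).2]⟩)) ⟨?_, ?_⟩)
      (Equiv.ofBijective (fun z => z ⟨l, by simp⟩) ⟨?_, ?_⟩)
      (fun x c => build i l (x, c)) ?_ _ ?_
    · intro x y hxy
      simp only [Prod.mk.injEq] at hxy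
      obtain ⟨a, b⟩ := hxy
      funext ⟨j, hj⟩
      by_cases h1 : j = i
      · subst h1; exact a
      have h2 : j ≠ l := by simpa using hj
      exact congrFun b ⟨j, by simp [h1, h2]⟩
    · intro x
      refine ⟨fun j => build i l (x, w0 l) j.1, ?_⟩
      refine Prod.ext (build_i _ _ _) ?_
      funext j
      exact build_b i l _ j.1 (hmem _ j.2).1 (hmem _ j.2).2
    · intro x y hxy
      funext ⟨j, hj⟩
      obtain rfl : j = l := by simpa using hj
      exact hxy
    · intro c
      refine ⟨fun j => build i l ((w0 i, fun j => w0 j), c) j.1, ?_⟩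
      exact build_l hil _
    · intro x z
      apply eq_build hil
      · simp [combine, hil]; rfl
      · simp [combine]; rfl
      · intro j hj
        simp [combine, (hmem j hj).2]; rfl
    · intro x y; simp [R, trR]
  have E3 : vnEntropy (trL (R.submatrix (Equiv.prodAssoc _ _ _).symm (Equiv.prodAssoc _ _ _).symm))
      = Sv ρ (Finset.univ \ {i}) := by
    refine Sv_eq h (Finset.univ \ {i}) (μ := d i)
      (Equiv.ofBijective (fun x => (fun j : {j // j ∈ (Finset.univ \ {i, l} : Finset ι)} => x ⟨j.1, by simp [(hmem _ j.2).1]⟩,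
        x ⟨l, by simp [hne]⟩)) ⟨?_, ?_⟩)
      (Equiv.ofBijective (fun z => z ⟨i, by simp⟩) ⟨?_, ?_⟩)
      (fun x a => build i l ((a, x.1), x.2)) ?_ _ ?_
    · intro x y hxy
      simp only [Prod.mk.injEq] at hxy
      obtain ⟨b, a⟩ := hxy
      funext ⟨j, hj⟩
      by_cases h1 : j = l
      · subst h1; exact a
      have h2 : j ≠ i := by simpa using hj
      exact congrFun b ⟨j, by simp [h1, h2]⟩
    · intro x
      refine ⟨fun j => build i l ((w0 i, x.1), x.2) j.1, ?_⟩
      refine Prod.ext ?_ (build_l hil _)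
      funext j
      exact build_b i l _ j.1 (hmem _ j.2).1 (hmem _ j.2).2
    · intro x y hxy
      funext ⟨j, hj⟩
      obtain rfl : j = i := by simpa using hj
      exact hxy
    · intro a
      refine ⟨fun j => build i l ((a, fun j => w0 j), w0 l) j.1, ?_⟩
      exact build_i _ _ _
    · intro x z
      apply eq_build hil
      · simp [combine]; rfl
      · simp [combine, hne]; rfl
      · intro j hj
        simp [combine, (hmem j hj).1]; rfl
    · intro x y; simp [R, trL]
  have E4 : vnEntropy (trL (trR R)) = Sv ρ (Finset.univ \ {i, l}) := by
    refine Sv_eq h (Finset.univ \ {i, l}) (μ := d i × d l) (Equiv.refl _)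
      (Equiv.ofBijective (fun z => (z ⟨i, by simp⟩, z ⟨l, by simp⟩)) ⟨?_, ?_⟩)
      (fun x c => build i l ((c.1, x), c.2)) ?_ _ ?_
    · intro x y hxy
      simp only [Prod.mk.injEq] at hxy
      obtain ⟨a, b⟩ := hxy
      funext ⟨j, hj⟩
      by_cases h1 : j = i
      · subst h1; exact a
      by_cases h2 : j = l
      · subst h2; exact b
      exact absurd (by simp [h1, h2]) hj
    · intro c
      refine ⟨fun j => build i l ((c.1, fun j => w0 j), c.2) j.1, ?_⟩
      exact Prod.ext (build_i _ _ _) (build_l hil _)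
    · intro x z
      apply eq_build hil
      · simp [combine]; rfl
      · simp [combine]; rfl
      · intro j hj
        simp only [combine]
        rw [dif_pos hj]
        rfl
    · intro x y; simp [R, trR, trL, Fintype.sum_prod_type]
  rw [E1, E2, E3, E4] at main
  exact main

lemma MI'_finest (ρ : Matrix (∀ i, d i) (∀ i, d i) ℂ) (s : Finset ι) :
    MI' ρ (finest s) = (∑ i ∈ s, Sv ρ (s \ {i})) - ((s.card : ℝ) - 1) * Sv ρ s := by
  have hinj : Function.Injective (fun i : ι => ({i} : Finset ι)) := Finset.singleton_injective
  have hsup : (finest s).sup id = s := by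
    rw [finest, Finset.sup_image]
    ext x; simp
  rw [MI', hsup, finest, Finset.sum_image (fun a _ b _ hab => hinj hab),
    Finset.card_image_of_injective _ hinj]

end fin

/-- For every density operator on an `(n+1)`-partite Hilbert space (`n + 1 ≥ 3`
parties `A_0,…,A_n`),
`I'(A_0:⋯:A_n) - I'(A_0:⋯:A_{n-1})
  = Σ_{i≠n} ( S(Ā_i) + S(Ā_n) - S(A_0⋯A_n) - S(complement of A_iA_n) ) ≥ 0`. -/
theorem dualMutualInfo_diff_eq_and_nonneg
    {n : ℕ} (hn : 2 ≤ n) {d : Fin (n + 1) → Type}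
    [∀ i, Fintype (d i)] [∀ i, DecidableEq (d i)]
    (ρ : Matrix (∀ i, d i) (∀ i, d i) ℂ) (hρ : IsDensity ρ) :
    MI' ρ (finest Finset.univ) - MI' ρ (finest (Finset.univ.erase (Fin.last n)))
      = ∑ i ∈ Finset.univ.erase (Fin.last n),
          (Sv ρ (Finset.univ \ {i}) + Sv ρ (Finset.univ \ {Fin.last n})
            - Sv ρ Finset.univ - Sv ρ (Finset.univ \ {i, Fin.last n}))
    ∧ 0 ≤ MI' ρ (finest Finset.univ) - MI' ρ (finest (Finset.univ.erase (Fin.last n))) := by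
  have heq : MI' ρ (finest Finset.univ) - MI' ρ (finest (Finset.univ.erase (Fin.last n)))
      = ∑ i ∈ Finset.univ.erase (Fin.last n),
          (Sv ρ (Finset.univ \ {i}) + Sv ρ (Finset.univ \ {Fin.last n})
            - Sv ρ Finset.univ - Sv ρ (Finset.univ \ {i, Fin.last n})) := by
    have hs : ∀ i : Fin (n + 1), Finset.univ.erase (Fin.last n) \ {i}
        = (Finset.univ \ {i, Fin.last n} : Finset (Fin (n + 1))) := by
      intro i; ext x; simp; tauto
    have hc : (Finset.univ.erase (Fin.last n)).card = n := by simp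
    rw [MI'_finest, MI'_finest, ← Finset.add_sum_erase _ _ (Finset.mem_univ (Fin.last n))]
    simp only [hs, Finset.sum_sub_distrib, Finset.sum_add_distrib, Finset.sum_const, hc,
      nsmul_eq_mul, Finset.card_univ, Fintype.card_fin]
    rw [Finset.erase_eq (Finset.univ) (Fin.last n)]
    push_cast
    ring
  refine ⟨heq, ?_⟩
  rw [heq]
  haveI : Nonempty (∀ i, d i) := by
    by_contra hne
    rw [not_nonempty_iff] at hne
    have := hρ.2
    simp [Matrix.trace] at this
  refine Finset.sum_nonneg fun i hi => ?_
  have := ssa_fin hρ.1 (Finset.ne_of_mem_erase hi)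
  linarith
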